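/- Let w₁, w₂ > 0 and 0 < a < (w₁+w₂)/2, and define G₂(a,w,t) = e^{(w₁+w₂−a)t}/((e^{w₁t}−1)(e^{w₂t}−1)) − 1/(w₁w₂t²) for t > 0. Then ∫₀^∞ G₂(a,w,t) t^{σ−1} dt tends to +∞ as σ tends to 1 from the right (σ ∈ (1,2)). -/

import Mathlib

open MeasureTheory Real Set Filter

/-- The Barnes `G₂` kernel:
`G₂(a, w, t) = e^{(w₁+w₂−a)t}/((e^{w₁t}−1)(e^{w₂t}−1)) − 1/(w₁w₂t²)`. -/
noncomputable def G₂ (a w₁ w₂ t : ℝ) : ℝ :=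
  Real.exp ((w₁ + w₂ - a) * t) / ((Real.exp (w₁ * t) - 1) * (Real.exp (w₂ * t) - 1))
    - 1 / (w₁ * w₂ * t ^ 2)

/-!
A Mellin transform `∫₀^∞ t^(s-1) f(t) dt` converging for `p < s < q` has residue
`lim_{t → 0⁺} t^p f(t)` at the left edge `p` of its strip, because `ε t^(ε-1) dt` on `(0, 1]`
concentrates at `0` as `ε → 0⁺`. The kernel `G₂` is `O(t⁻²)` at infinity, and since
`(eˣ - 1)/x = 1 + x/2 + O(x²)`, it satisfies
`t G₂(t) → (w₁ + w₂ - 2a)/(2w₁w₂)` as `t → 0⁺`. A positive residue forces divergence to `+∞`.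
-/

open Topology Asymptotics

theorem tendsto_sub_right_nhdsGT_zero (p : ℝ) :
    Tendsto (fun s ↦ s - p) (𝓝[>] p) (𝓝[>] 0) := by
  refine tendsto_nhdsWithin_iff.2
    ⟨?_, eventually_mem_nhdsWithin.mono fun _ hs ↦ mem_Ioi.2 (sub_pos.2 (mem_Ioi.1 hs))⟩
  simpa using ((continuous_sub_right p).tendsto p).mono_left nhdsWithin_le_nhds

theorem tendsto_atTop_of_tendsto_sub_mul {F : ℝ → ℝ} {p L : ℝ} (hL : 0 < L)
    (hF : Tendsto (fun s ↦ (s - p) * F s) (𝓝[>] p) (𝓝 L)) : Tendsto F (𝓝[>] p) atTop := by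
  have hinv : Tendsto (fun s ↦ (s - p)⁻¹) (𝓝[>] p) atTop :=
    tendsto_inv_nhdsGT_zero.comp (tendsto_sub_right_nhdsGT_zero p)
  refine (hinv.atTop_mul_pos hL hF).congr' ?_
  filter_upwards [self_mem_nhdsWithin] with s hs
  exact inv_mul_cancel_left₀ (sub_pos.2 hs).ne' _

section Mellin

variable {E : Type*} [NormedAddCommGroup E] [NormedSpace ℝ E]

theorem tendstoUniformlyOn_mul_rpow_sub_one {δ : ℝ} (hδ : 0 < δ) :
    TendstoUniformlyOn (fun ε t : ℝ ↦ ε * t ^ (ε - 1)) 0 (𝓝[>] 0) (Ici δ) := by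
  have hlim : Tendsto (fun ε : ℝ ↦ ε * δ ^ (ε - 1)) (𝓝[>] 0) (𝓝 0) := by
    have hcont : Continuous fun ε : ℝ ↦ ε * δ ^ (ε - 1) :=
      continuous_id.mul ((continuous_const_rpow hδ.ne').comp (continuous_sub_right 1))
    simpa using (hcont.tendsto 0).mono_left nhdsWithin_le_nhds
  rw [Metric.tendstoUniformlyOn_iff]
  intro η hη
  filter_upwards [hlim.eventually_lt_const hη, Ioo_mem_nhdsGT one_pos] with ε hεη hε t ht
  have ht₀ : 0 < t := hδ.trans_le ht
  rw [Pi.zero_apply, dist_zero_left,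
    Real.norm_of_nonneg (mul_nonneg hε.1.le (rpow_nonneg ht₀.le _))]
  calc ε * t ^ (ε - 1) ≤ ε * δ ^ (ε - 1) :=
        mul_le_mul_of_nonneg_left
          (rpow_le_rpow_of_nonpos hδ ht (sub_nonpos.2 hε.2.le)) hε.1.le
    _ < η := hεη

theorem integral_Ioc_mul_rpow_sub_one {d ε : ℝ} (hd : 0 ≤ d) (hε : 0 < ε) :
    ∫ t in Ioc 0 d, ε * t ^ (ε - 1) = d ^ ε := by
  rw [integral_const_mul, ← intervalIntegral.integral_of_le hd,
    integral_rpow (.inl (by linarith)), sub_add_cancel, zero_rpow hε.ne', sub_zero,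
    mul_div_cancel₀ _ hε.ne']

theorem tendsto_integral_Ioc_mul_rpow_sub_one_smul [CompleteSpace E] {g : ℝ → E} {L : E} {d : ℝ}
    (hd : 0 < d) (hg : IntegrableOn g (Ioc 0 d)) (hL : Tendsto g (𝓝[>] 0) (𝓝 L)) :
    Tendsto (fun ε : ℝ ↦ ∫ t in Ioc 0 d, (ε * t ^ (ε - 1)) • g t) (𝓝[>] 0) (𝓝 L) := by
  refine tendsto_setIntegral_peak_smul_of_integrableOn_of_tendsto (x₀ := (0 : ℝ))
    measurableSet_Ioc measurableSet_Ioc subset_rfl self_mem_nhdsWithin measure_Ioc_lt_top.ne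
    ?_ (fun u hu h0u ↦ ?_) ?_ ?_ hg (hL.mono_left (nhdsWithin_mono _ Ioc_subset_Ioi_self))
  · filter_upwards [self_mem_nhdsWithin] with ε hε t ht
    exact mul_nonneg hε.le (rpow_nonneg ht.1.le _)
  · obtain ⟨δ, hδ, hδu⟩ := Metric.isOpen_iff.1 hu 0 h0u
    refine (tendstoUniformlyOn_mul_rpow_sub_one hδ).mono fun t ht ↦ ?_
    by_contra htδ
    refine ht.2 (hδu ?_)
    rw [mem_ball_zero_iff, Real.norm_of_nonneg ht.1.1.le]
    exact not_le.1 htδ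
  · have hpow : Tendsto (fun ε : ℝ ↦ d ^ ε) (𝓝[>] 0) (𝓝 1) := by
      simpa using ((continuous_const_rpow hd.ne').tendsto 0).mono_left nhdsWithin_le_nhds
    refine hpow.congr' ?_
    filter_upwards [self_mem_nhdsWithin] with ε hε
    exact (integral_Ioc_mul_rpow_sub_one hd.le hε).symm
  · exact .of_forall fun ε ↦ by fun_prop

theorem norm_integral_Ioi_one_rpow_smul_le {f : ℝ → E} {s q : ℝ} (hsq : s ≤ q)
    (hf : IntegrableOn (fun t ↦ t ^ q • f t) (Ioi 1)) :
    ‖∫ t in Ioi 1, t ^ s • f t‖ ≤ ∫ t in Ioi 1, ‖t ^ q • f t‖ := by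
  refine norm_integral_le_of_norm_le hf.norm (ae_restrict_of_forall_mem measurableSet_Ioi ?_)
  intro t ht
  have ht₁ : 1 ≤ t := le_of_lt ht
  simp only [norm_smul, norm_rpow_of_nonneg (zero_le_one.trans ht₁),
    Real.norm_of_nonneg (zero_le_one.trans ht₁)]
  gcongr

theorem integrableOn_Ioc_zero_one_rpow_smul_of_le {f : ℝ → E} {r q : ℝ} (hqr : q ≤ r)
    (hf : IntegrableOn (fun t ↦ t ^ q • f t) (Ioc 0 1)) :
    IntegrableOn (fun t ↦ t ^ r • f t) (Ioc 0 1) := by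
  have hmul : IntegrableOn (fun t ↦ t ^ (r - q) • t ^ q • f t) (Ioc 0 1) := by
    refine hf.bdd_smul 1 (by fun_prop) (ae_restrict_of_forall_mem measurableSet_Ioc ?_)
    intro t ht
    rw [Real.norm_of_nonneg (rpow_nonneg ht.1.le _)]
    exact rpow_le_one ht.1.le ht.2 (sub_nonneg.2 hqr)
  refine hmul.congr_fun (fun t ht ↦ ?_) measurableSet_Ioc
  simp only [smul_smul, ← rpow_add ht.1, sub_add_cancel]

theorem tendsto_sub_smul_integral_rpow_sub_one_smul [CompleteSpace E] {f : ℝ → E} {L : E}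
    {p q : ℝ} (hpq : p < q)
    (hf : ∀ s ∈ Ioo p q, IntegrableOn (fun t ↦ t ^ (s - 1) • f t) (Ioi 0))
    (hL : Tendsto (fun t ↦ t ^ p • f t) (𝓝[>] 0) (𝓝 L)) :
    Tendsto (fun s ↦ (s - p) • ∫ t in Ioi 0, t ^ (s - 1) • f t) (𝓝[>] p) (𝓝 L) := by
  have hsub := tendsto_sub_right_nhdsGT_zero p
  obtain ⟨r, hpr, hr⟩ := exists_between (lt_min hpq (lt_add_one p))
  obtain ⟨hrq, hrp⟩ := lt_min_iff.1 hr
  have hfr := hf r ⟨hpr, hrq⟩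
  have hhead : Tendsto (fun s ↦ ∫ t in Ioc 0 1, ((s - p) * t ^ (s - p - 1)) • t ^ p • f t)
      (𝓝[>] p) (𝓝 L) :=
    (tendsto_integral_Ioc_mul_rpow_sub_one_smul one_pos
      (integrableOn_Ioc_zero_one_rpow_smul_of_le (by linarith)
        (hfr.mono_set Ioc_subset_Ioi_self)) hL).comp hsub
  have htail : Tendsto (fun s ↦ (s - p) • ∫ t in Ioi 1, t ^ (s - 1) • f t) (𝓝[>] p) (𝓝 0) := by
    refine (hsub.mono_right nhdsWithin_le_nhds).zero_smul_isBoundedUnder_le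
      (isBoundedUnder_of_eventually_le (a := ∫ t in Ioi 1, ‖t ^ (r - 1) • f t‖) ?_)
    filter_upwards [Ioo_mem_nhdsGT hpr] with s hs
    exact norm_integral_Ioi_one_rpow_smul_le (by linarith [hs.2])
      (hfr.mono_set (Ioi_subset_Ioi zero_le_one))
  refine (add_zero L ▸ hhead.add htail).congr' ?_
  filter_upwards [Ioo_mem_nhdsGT hpq] with s hs
  have hIoc : ∫ t in Ioc 0 1, ((s - p) * t ^ (s - p - 1)) • t ^ p • f t =
      (s - p) • ∫ t in Ioc 0 1, t ^ (s - 1) • f t := by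
    rw [← integral_smul]
    refine setIntegral_congr_fun measurableSet_Ioc fun t ht ↦ ?_
    simp only [smul_smul, mul_assoc, ← rpow_add ht.1]
    ring_nf
  rw [hIoc, ← smul_add, ← Ioc_union_Ioi_eq_Ioi zero_le_one,
    setIntegral_union (Ioc_disjoint_Ioi le_rfl) measurableSet_Ioi
      ((hf s hs).mono_set Ioc_subset_Ioi_self)
      ((hf s hs).mono_set (Ioi_subset_Ioi zero_le_one))]

end Mellin

section Kernel

variable {a w₁ w₂ : ℝ}

theorem exp_mul_sub_one_ne_zero {w t : ℝ} (hw : w ≠ 0) (ht : t ≠ 0) : exp (w * t) - 1 ≠ 0 :=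
  sub_ne_zero.2 ((exp_eq_one_iff _).not.2 (mul_ne_zero hw ht))

theorem dslope_exp_zero_zero : dslope exp 0 0 = 1 := by
  simp

theorem dslope_exp_zero_of_ne {x : ℝ} (hx : x ≠ 0) : dslope exp 0 x = (exp x - 1) / x := by
  rw [dslope_of_ne _ hx, slope_def_field, exp_zero, sub_zero]

theorem hasDerivAt_dslope_exp_zero : HasDerivAt (dslope exp 0) (1 / 2) 0 := by
  have hexp : HasFPowerSeriesAt exp (NormedSpace.expSeries ℝ ℝ) 0 :=
    exp_eq_exp_ℝ ▸ NormedSpace.exp_hasFPowerSeriesAt_zero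
  have hcoeff : (NormedSpace.expSeries ℝ ℝ).fslope.coeff 1 = 1 / 2 := by
    rw [FormalMultilinearSeries.coeff_fslope, NormedSpace.expSeries_eq_ofScalars,
      FormalMultilinearSeries.coeff_ofScalars]
    norm_num
  exact hcoeff ▸ hexp.has_fpower_series_dslope_fslope.hasDerivAt

/-- The function `t² (G₂(a, w, t) + 1 / (w₁ w₂ t²))`, extended continuously to `t = 0`: it is
expressed through `dslope exp 0 x`, which is `(eˣ - 1) / x` with the value `1` at `0`, so that
`t G₂(a, w, t)` becomes its slope at `0`. -/
noncomputable def regularizedG₂ (a w₁ w₂ t : ℝ) : ℝ :=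
  exp ((w₁ + w₂ - a) * t) / (w₁ * w₂ * (dslope exp 0 (w₁ * t) * dslope exp 0 (w₂ * t)))

theorem slope_regularizedG₂ (hw₁ : w₁ ≠ 0) (hw₂ : w₂ ≠ 0) {t : ℝ} (ht : t ≠ 0) :
    slope (regularizedG₂ a w₁ w₂) 0 t = t * G₂ a w₁ w₂ t := by
  have h₁ := exp_mul_sub_one_ne_zero hw₁ ht
  have h₂ := exp_mul_sub_one_ne_zero hw₂ ht
  simp only [slope_def_field, regularizedG₂, G₂, mul_zero, exp_zero, dslope_exp_zero_zero,
    dslope_exp_zero_of_ne (mul_ne_zero hw₁ ht), dslope_exp_zero_of_ne (mul_ne_zero hw₂ ht)]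
  field_simp
  ring

theorem hasDerivAt_regularizedG₂_zero (hw₁ : w₁ ≠ 0) (hw₂ : w₂ ≠ 0) :
    HasDerivAt (regularizedG₂ a w₁ w₂) ((w₁ + w₂ - 2 * a) / (2 * w₁ * w₂)) 0 := by
  have hlin (c : ℝ) : HasDerivAt (fun t ↦ c * t) c 0 := by
    simpa using (hasDerivAt_id (0 : ℝ)).const_mul c
  have hdslope (w : ℝ) : HasDerivAt (fun t ↦ dslope exp 0 (w * t)) (1 / 2 * w) 0 :=
    HasDerivAt.comp (h₂ := dslope exp 0) 0 (by simpa using hasDerivAt_dslope_exp_zero) (hlin w)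
  have hquot := (hlin (w₁ + w₂ - a)).exp.div
    (((hdslope w₁).mul (hdslope w₂)).const_mul (w₁ * w₂)) (by simp [hw₁, hw₂])
  refine hquot.congr_deriv ?_
  simp only [Pi.mul_apply, mul_zero, exp_zero, dslope_exp_zero_zero]
  field_simp
  ring

theorem tendsto_mul_G₂_nhdsNE_zero (hw₁ : w₁ ≠ 0) (hw₂ : w₂ ≠ 0) :
    Tendsto (fun t ↦ t * G₂ a w₁ w₂ t) (𝓝[≠] 0) (𝓝 ((w₁ + w₂ - 2 * a) / (2 * w₁ * w₂))) := by
  refine (hasDerivAt_regularizedG₂_zero hw₁ hw₂).tendsto_slope.congr' ?_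
  filter_upwards [self_mem_nhdsWithin] with t ht using slope_regularizedG₂ hw₁ hw₂ ht

theorem isBigO_G₂_nhdsGT_zero (hw₁ : w₁ ≠ 0) (hw₂ : w₂ ≠ 0) :
    G₂ a w₁ w₂ =O[𝓝[>] 0] fun t ↦ t ^ (-1 : ℝ) := by
  have hbdd := ((tendsto_mul_G₂_nhdsNE_zero (a := a) hw₁ hw₂).mono_left
    (nhdsGT_le_nhdsNE 0)).isBigO_one ℝ
  refine ((isBigO_refl (fun t : ℝ ↦ t ^ (-1 : ℝ)) (𝓝[>] 0)).mul hbdd).congr' ?_ (by simp)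
  filter_upwards [self_mem_nhdsWithin] with t ht
  rw [rpow_neg_one, inv_mul_cancel_left₀ (ne_of_gt ht)]

theorem exp_div_exp_sub_one_mul_exp_sub_one (a w₁ w₂ t : ℝ) :
    exp ((w₁ + w₂ - a) * t) / ((exp (w₁ * t) - 1) * (exp (w₂ * t) - 1)) =
      exp (-a * t) * ((1 - exp (-w₁ * t)) * (1 - exp (-w₂ * t)))⁻¹ := by
  have hsplit : exp ((w₁ + w₂ - a) * t) = exp (w₁ * t) * exp (w₂ * t) * exp (-a * t) := by
    rw [← exp_add, ← exp_add]
    ring_nf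
  have hfactor (w : ℝ) : exp (w * t) - 1 = exp (w * t) * (1 - exp (-w * t)) := by
    rw [mul_sub, ← exp_add]
    simp
  rw [hsplit, hfactor, hfactor, mul_mul_mul_comm, mul_div_mul_left _ _ (by positivity),
    div_eq_mul_inv]

theorem isBigO_G₂_atTop (hw₁ : 0 < w₁) (hw₂ : 0 < w₂) (ha : 0 < a) :
    G₂ a w₁ w₂ =O[atTop] fun t ↦ t ^ (-2 : ℝ) := by
  have hexp {w : ℝ} (hw : 0 < w) : Tendsto (fun t ↦ 1 - exp (-w * t)) atTop (𝓝 1) := by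
    simpa using (tendsto_exp_atBot.comp
      (tendsto_id.const_mul_atTop_of_neg (neg_neg_of_pos hw))).const_sub 1
  have hinv := ((hexp hw₁).mul (hexp hw₂)).inv₀ (by norm_num)
  have hfirst : (fun t ↦ exp ((w₁ + w₂ - a) * t) /
      ((exp (w₁ * t) - 1) * (exp (w₂ * t) - 1))) =O[atTop] fun t ↦ t ^ (-2 : ℝ) := by
    simpa only [exp_div_exp_sub_one_mul_exp_sub_one, mul_one] using
      (isLittleO_exp_neg_mul_rpow_atTop ha (-2)).isBigO.mul (hinv.isBigO_one ℝ)
  refine hfirst.sub (((isBigO_refl _ _).const_mul_left (1 / (w₁ * w₂))).congr' ?_ .rfl)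
  filter_upwards [eventually_ge_atTop 0] with t ht
  rw [rpow_neg ht, rpow_two, ← div_eq_mul_inv, div_div]

theorem continuousOn_G₂ (hw₁ : w₁ ≠ 0) (hw₂ : w₂ ≠ 0) : ContinuousOn (G₂ a w₁ w₂) {0}ᶜ := by
  refine .sub (.div (by fun_prop) (by fun_prop) fun t ht ↦ ?_)
    (.div (by fun_prop) (by fun_prop) fun t ht ↦ ?_)
  · exact mul_ne_zero (exp_mul_sub_one_ne_zero hw₁ ht) (exp_mul_sub_one_ne_zero hw₂ ht)
  · exact mul_ne_zero (mul_ne_zero hw₁ hw₂) (pow_ne_zero 2 ht)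

theorem integrableOn_rpow_sub_one_mul_G₂ (hw₁ : 0 < w₁) (hw₂ : 0 < w₂) (ha : 0 < a) {s : ℝ}
    (hs : s ∈ Ioo 1 2) : IntegrableOn (fun t ↦ t ^ (s - 1) * G₂ a w₁ w₂ t) (Ioi 0) := by
  have hcont : ContinuousOn (G₂ a w₁ w₂) (Ioi 0) :=
    (continuousOn_G₂ hw₁.ne' hw₂.ne').mono fun t ht ↦ ne_of_gt ht
  exact mellin_convergent_of_isBigO_scalar (hcont.locallyIntegrableOn measurableSet_Ioi)
    (isBigO_G₂_atTop hw₁ hw₂ ha) hs.2 (isBigO_G₂_nhdsGT_zero hw₁.ne' hw₂.ne') hs.1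

end Kernel

theorem stmt7_general {w₁ w₂ a : ℝ} (hw₁ : 0 < w₁) (hw₂ : 0 < w₂) (ha : 0 < a) :
    Tendsto (fun σ : ℝ ↦ (σ - 1) * ∫ t in Ioi (0 : ℝ), G₂ a w₁ w₂ t * t ^ (σ - 1))
      (𝓝[>] 1) (𝓝 ((w₁ + w₂ - 2 * a) / (2 * w₁ * w₂))) := by
  have hzero := (tendsto_mul_G₂_nhdsNE_zero (a := a) hw₁.ne' hw₂.ne').mono_left
    (nhdsGT_le_nhdsNE 0)
  have hres := tendsto_sub_smul_integral_rpow_sub_one_smul one_lt_two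
    (fun s hs ↦ integrableOn_rpow_sub_one_mul_G₂ hw₁ hw₂ ha hs) (by simpa using hzero)
  simpa only [smul_eq_mul, mul_comm (_ ^ _)] using hres

theorem stmt7 (w₁ w₂ a : ℝ) (hw₁ : 0 < w₁) (hw₂ : 0 < w₂)
    (ha : 0 < a) (ha' : a < (w₁ + w₂) / 2) :
    Filter.Tendsto (fun σ : ℝ => ∫ t in Set.Ioi (0 : ℝ), G₂ a w₁ w₂ t * t ^ (σ - 1))
      (nhdsWithin 1 (Set.Ioo (1 : ℝ) 2)) Filter.atTop := by
  have hpos : 0 < (w₁ + w₂ - 2 * a) / (2 * w₁ * w₂) := div_pos (by linarith) (by positivity)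
  exact (tendsto_atTop_of_tendsto_sub_mul hpos (stmt7_general hw₁ hw₂ ha)).mono_left
    (nhdsWithin_mono 1 Ioo_subset_Ioi_self)
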